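/- Let n ≥ 2, let q : ℝ^n_+ → ℝ satisfy the cost-function conditions, and let c ∈ ℝ^n_+. Then the profit operator Π_q is injective on L^2_{I−c}(ℝ^n_+) (i.e., if f ∈ L^2_{I−c}(ℝ^n_+) and (Π_q f)(p_0,p) = 0 for all p_0 > 0 and all p ∈ ℝ^n_+, then f = 0 a.e.) if and only if the set { ξ ∈ ℝ^n : (M e^{−q})(c + iξ) = 0 } has Lebesgue measure zero in ℝ^n. -/

import Mathlib

open MeasureTheory Complex Set

noncomputable section

/-- The positive orthant `ℝ^n_+`. -/
def posOrth (n : ℕ) : Set (Fin n → ℝ) := {x | ∀ i, 0 < x i}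

/-- `q` satisfies the cost-function conditions: `C¹` on `ℝ^n_+`, positive,
positively homogeneous of degree one, with bounded level sets. -/
def IsCostFun (n : ℕ) (q : (Fin n → ℝ) → ℝ) : Prop :=
  ContDiffOn ℝ 1 q (posOrth n) ∧
  (∀ x ∈ posOrth n, 0 < q x) ∧
  (∀ lam : ℝ, 0 < lam → ∀ x ∈ posOrth n, q (fun i => lam * x i) = lam * q x) ∧
  (∀ t : ℝ, Bornology.IsBounded {x | x ∈ posOrth n ∧ q x = t})

/-- The `n`-dimensional Mellin transform `(Mg)(z) = ∫_{ℝ^n_+} x^{z-I} g(x) dx`. -/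
def mellinT (n : ℕ) (g : (Fin n → ℝ) → ℝ) (z : Fin n → ℂ) : ℂ :=
  ∫ x in posOrth n, (∏ i, (x i : ℂ) ^ (z i - 1)) * g x

/-- Membership in `L²_c(ℝ^n_+)`: measurable with `∫ |f|² x^{2c-I} < ∞`. -/
def MemL2w (n : ℕ) (c : Fin n → ℝ) (f : (Fin n → ℝ) → ℝ) : Prop :=
  AEStronglyMeasurable f (volume.restrict (posOrth n)) ∧
  IntegrableOn (fun x => |f x| ^ 2 * ∏ i, x i ^ (2 * c i - 1)) (posOrth n)

/-- The profit operator `(Π_q f)(p₀, p)`. -/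
def Piq (n : ℕ) (q : (Fin n → ℝ) → ℝ) (f : (Fin n → ℝ) → ℝ)
    (p0 : ℝ) (p : Fin n → ℝ) : ℝ :=
  ∫ x in posOrth n, max 0 (p0 - q (fun i => p i * x i)) * f x

/-!
In the coordinates `x = exp u` the space `L²_{I - c}` becomes the unweighted `L²(ℝⁿ)`, and, by
homogeneity, `Π_q f` vanishes identically iff the transform of `f` is orthogonal to every translate
of the kernel `H(u) = exp(c · u) max(0, 1 - q(exp u))`. Boundedness of `{q = 1}` and `c > 0` put `H`
in `L¹ ∩ L²`, so Wiener's theorem applies: the translates of `H` are total in `L²` iff `𝓕 H`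
vanishes only on a null set. Finally `∫₀^∞ max(0, t - a) exp(-t) dt = exp(-a)`, and rescaling by `t`
gives `(M e^{-q})(z) = Γ(∑ zᵢ + 2) ∫ exp(z · u) max(0, 1 - q(exp u)) du`. For `z = c + iξ` the
integral is `𝓕 H (-ξ / 2π)` and the Gamma factor has no zeros, so the two zero sets correspond.
-/

section Fourier

open FourierTransform SchwartzMap

variable {V : Type*} [NormedAddCommGroup V] [InnerProductSpace ℝ V] [FiniteDimensional ℝ V]
  [MeasurableSpace V] [BorelSpace V]

section NormedSpace

variable {F : Type*} [NormedAddCommGroup F] [NormedSpace ℂ F]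

lemma continuous_fourier {f : V → F} (hf : Integrable f) : Continuous (𝓕 f) :=
  VectorFourier.fourierIntegral_continuous Real.continuous_fourierChar (innerSL ℝ).continuous₂ hf

lemma norm_fourier_le_integral_norm (f : V → F) (ξ : V) : ‖𝓕 f ξ‖ ≤ ∫ x, ‖f x‖ :=
  VectorFourier.norm_fourierIntegral_le_integral_norm _ _ _ f ξ

lemma fourier_comp_add_right (f : V → F) (v ξ : V) :
    𝓕 (fun x => f (x + v)) ξ = Real.fourierChar (inner ℝ v ξ) • 𝓕 f ξ :=
  congrFun (VectorFourier.fourierIntegral_comp_add_right Real.fourierChar volume (innerₗ V) f v) ξ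

variable [CompleteSpace F]

lemma integral_fourier_smul_eq {f : V → ℂ} {g : V → F} (hf : Integrable f) (hg : Integrable g) :
    ∫ x, 𝓕 f x • g x = ∫ x, f x • 𝓕 g x := by
  have h := VectorFourier.integral_fourierIntegral_smul_eq_flip (L := innerₗ V)
    Real.continuous_fourierChar (innerSL ℝ).continuous₂ hf hg
  rwa [flip_innerₗ] at h

lemma ae_eq_zero_of_integral_schwartz_smul_eq_zero {f : V → F} (hf : LocallyIntegrable f)
    (h : ∀ φ : 𝓢(V, ℂ), ∫ x, φ x • f x = 0) : ∀ᵐ x, f x = 0 := by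
  refine ae_eq_zero_of_integral_contDiff_smul_eq_zero hf fun g hg hgc => ?_
  have hsupp : HasCompactSupport (Complex.ofRealCLM ∘ g) := hgc.comp_left rfl
  have hsmooth : ContDiff ℝ (⊤ : ℕ∞) (Complex.ofRealCLM ∘ g) := Complex.ofRealCLM.contDiff.comp hg
  simpa using h (hsupp.toSchwartzMap hsmooth)

lemma ae_eq_zero_of_fourier_eq_zero {f : V → F} (hf : Integrable f) (h : ∀ ξ, 𝓕 f ξ = 0) :
    ∀ᵐ x, f x = 0 := by
  refine ae_eq_zero_of_integral_schwartz_smul_eq_zero hf.locallyIntegrable fun φ => ?_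
  have hφ : 𝓕 (𝓕⁻ φ) = φ := FourierTransform.fourier_fourierInv_eq φ
  rw [← hφ, SchwartzMap.fourier_coe,
    integral_fourier_smul_eq (SchwartzMap.integrable _) hf]
  simp [h]

end NormedSpace

section HilbertSpace

variable {F : Type*} [NormedAddCommGroup F] [InnerProductSpace ℂ F] [CompleteSpace F]

lemma integral_schwartz_smul_fourier_toLp {f : V → F} (hf₁ : Integrable f) (hf₂ : MemLp f 2)
    (φ : 𝓢(V, ℂ)) :
    ∫ x, φ x • (𝓕 (hf₂.toLp f) : Lp F 2 (volume : Measure V)) x = ∫ x, φ x • 𝓕 f x := by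
  have h := congrArg (fun T => T φ) (Lp.fourier_toTemperedDistribution_eq (hf₂.toLp f))
  simp only [TemperedDistribution.fourier_apply, Lp.toTemperedDistribution_apply] at h
  calc ∫ x, φ x • (𝓕 (hf₂.toLp f) : Lp F 2 (volume : Measure V)) x
      = ∫ x, (𝓕 φ) x • hf₂.toLp f x := h.symm
    _ = ∫ x, (𝓕 φ) x • f x := by
        refine integral_congr_ae ?_
        filter_upwards [hf₂.coeFn_toLp] with x hx
        rw [hx]
    _ = ∫ x, φ x • 𝓕 f x := by
        rw [SchwartzMap.fourier_coe, integral_fourier_smul_eq φ.integrable hf₁]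

lemma coeFn_fourier_toLp {f : V → F} (hf₁ : Integrable f) (hf₂ : MemLp f 2) :
    (𝓕 (hf₂.toLp f) : Lp F 2 (volume : Measure V)) =ᵐ[volume] 𝓕 f := by
  have hcont := continuous_fourier hf₁
  have hL2 : MemLp (𝓕 (hf₂.toLp f) : Lp F 2 (volume : Measure V)) 2 := Lp.memLp _
  suffices h : ∀ᵐ x, ((𝓕 (hf₂.toLp f) : Lp F 2 (volume : Measure V)) - 𝓕 f : V → F) x = 0 by
    filter_upwards [h] with x hx using sub_eq_zero.1 hx
  refine ae_eq_zero_of_integral_schwartz_smul_eq_zero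
    ((hL2.locallyIntegrable one_le_two).sub hcont.locallyIntegrable) fun φ => ?_
  have hint₁ : Integrable (fun x => φ x • (𝓕 (hf₂.toLp f) : Lp F 2 (volume : Measure V)) x) :=
    memLp_one_iff_integrable.1 (hL2.smul (φ.memLp 2))
  have hint₂ : Integrable (fun x => φ x • 𝓕 f x) :=
    φ.integrable.smul_bdd _ hcont.aestronglyMeasurable
      (.of_forall (norm_fourier_le_integral_norm f))
  simp only [Pi.sub_apply, smul_sub]
  rw [integral_sub hint₁ hint₂, integral_schwartz_smul_fourier_toLp hf₁ hf₂, sub_self]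

lemma integral_inner_comp_add_right_eq_fourier {f : V → F} (hf₁ : Integrable f) (hf₂ : MemLp f 2)
    (g : Lp F 2 (volume : Measure V)) (v : V) :
    ∫ x, inner ℂ (f (x + v)) (g x) =
      𝓕 (fun ξ => inner ℂ (𝓕 f ξ) ((𝓕 g : Lp F 2 (volume : Measure V)) ξ)) v := by
  have hfv₁ : Integrable (fun x => f (x + v)) := hf₁.comp_add_right v
  have hfv₂ : MemLp (fun x => f (x + v)) 2 :=
    hf₂.comp_measurePreserving (measurePreserving_add_right volume v)
  calc ∫ x, inner ℂ (f (x + v)) (g x) = inner ℂ (hfv₂.toLp _) g := by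
        rw [L2.inner_def]
        refine integral_congr_ae ?_
        filter_upwards [hfv₂.coeFn_toLp] with x hx
        rw [hx]
    _ = inner ℂ (𝓕 (hfv₂.toLp _)) (𝓕 g) := (Lp.inner_fourier_eq _ _).symm
    _ = 𝓕 (fun ξ => inner ℂ (𝓕 f ξ) ((𝓕 g : Lp F 2 (volume : Measure V)) ξ)) v := by
        rw [L2.inner_def, Real.fourier_eq]
        refine integral_congr_ae ?_
        filter_upwards [coeFn_fourier_toLp hfv₁ hfv₂] with ξ hξ
        rw [hξ, fourier_comp_add_right, Circle.smul_def, Circle.smul_def, inner_smul_left,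
          smul_eq_mul, AddChar.map_neg_eq_inv, Circle.coe_inv_eq_conj, real_inner_comm]

lemma forall_integral_inner_comp_add_right_eq_zero_iff {f : V → F} (hf₁ : Integrable f)
    (hf₂ : MemLp f 2) (g : Lp F 2 (volume : Measure V)) :
    (∀ v, ∫ x, inner ℂ (f (x + v)) (g x) = 0) ↔
      ∀ᵐ ξ, inner ℂ (𝓕 f ξ) ((𝓕 g : Lp F 2 (volume : Measure V)) ξ) = 0 := by
  simp only [integral_inner_comp_add_right_eq_fourier hf₁ hf₂]
  refine ⟨ae_eq_zero_of_fourier_eq_zero ?_, fun h v => ?_⟩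
  · refine (L2.integrable_inner (𝓕 (hf₂.toLp f)) (𝓕 g)).congr ?_
    filter_upwards [coeFn_fourier_toLp hf₁ hf₂] with ξ hξ
    rw [hξ]
  · rw [Real.fourier_congr_ae h, Real.fourier_eq]
    simp

end HilbertSpace

lemma exists_ne_zero_fourier_eq_zero_off {s : Set V} (hs : MeasurableSet s) (hs₀ : volume s ≠ 0) :
    ∃ g : Lp ℂ 2 (volume : Measure V), g ≠ 0 ∧
      ∀ᵐ ξ, ξ ∉ s → (𝓕 g : Lp ℂ 2 (volume : Measure V)) ξ = 0 := by
  obtain ⟨t, ht, hts, ht₀, ht_top⟩ :=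
    Measure.exists_subset_measure_lt_top hs (pos_iff_ne_zero.2 hs₀)
  let G : Lp ℂ 2 (volume : Measure V) := indicatorConstLp 2 ht ht_top.ne 1
  have hG : 𝓕 (𝓕⁻ G) = G := FourierTransform.fourier_fourierInv_eq G
  refine ⟨𝓕⁻ G, norm_pos_iff.1 ?_, ?_⟩
  · rw [← Lp.norm_fourier_eq, hG, norm_indicatorConstLp two_ne_zero ENNReal.ofNat_ne_top, norm_one,
      one_mul]
    exact Real.rpow_pos_of_pos (ENNReal.toReal_pos ht₀.ne' ht_top.ne) _
  · rw [hG]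
    filter_upwards [indicatorConstLp_coeFn_notMem (p := 2) (hs := ht) (hμs := ht_top.ne)
      (c := (1 : ℂ))] with ξ hξ hξs using hξ fun h => hξs (hts h)

/-- Totality of the translates of `H` in `L²(V, 𝕜)`, phrased as triviality of their orthogonal
complement. -/
def TranslatesTotal {𝕜 : Type*} [RCLike 𝕜] (H : V → 𝕜) : Prop :=
  ∀ g : V → 𝕜, MemLp g 2 → (∀ v, ∫ x, inner 𝕜 (H (x + v)) (g x) = 0) → ∀ᵐ x, g x = 0

/-- The `L²` case of Wiener's Tauberian theorem. -/
theorem translatesTotal_iff_volume_fourier_zeros {H : V → ℂ} (hH₁ : Integrable H)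
    (hH₂ : MemLp H 2) : TranslatesTotal H ↔ volume {ξ | 𝓕 H ξ = 0} = 0 := by
  constructor
  · intro htotal
    by_contra hne
    obtain ⟨g, hg₀, hg⟩ := exists_ne_zero_fourier_eq_zero_off
      (isClosed_singleton.preimage (continuous_fourier hH₁)).measurableSet hne
    refine hg₀ ((Lp.eq_zero_iff_ae_eq_zero).2 (htotal g (Lp.memLp g) ?_))
    rw [forall_integral_inner_comp_add_right_eq_zero_iff hH₁ hH₂]
    filter_upwards [hg] with ξ hξ
    by_cases h : 𝓕 H ξ = 0
    · rw [h, inner_zero_left]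
    · rw [hξ h, inner_zero_right]
  · intro hzeros g hg horth
    have hg_ae := hg.coeFn_toLp
    have hFg : ∀ᵐ ξ, inner ℂ (𝓕 H ξ) ((𝓕 (hg.toLp g) : Lp ℂ 2 (volume : Measure V)) ξ) = 0 := by
      rw [← forall_integral_inner_comp_add_right_eq_zero_iff hH₁ hH₂]
      intro v
      rw [← horth v]
      refine integral_congr_ae ?_
      filter_upwards [hg_ae] with x hx
      rw [hx]
    have hFg₀ : 𝓕 (hg.toLp g) = 0 := by
      rw [Lp.eq_zero_iff_ae_eq_zero]
      filter_upwards [hFg, measure_eq_zero_iff_ae_notMem.1 hzeros] with ξ hξ hHξ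
      exact (mul_eq_zero.1 hξ).resolve_right (by simpa using hHξ)
    have hg₀ : hg.toLp g = 0 := by rw [← norm_eq_zero, ← Lp.norm_fourier_eq, hFg₀, norm_zero]
    exact hg_ae.symm.trans (Lp.eq_zero_iff_ae_eq_zero.1 hg₀)

theorem translatesTotal_ofReal_iff {H : V → ℝ} (hH : MemLp H 2) :
    TranslatesTotal (fun x => (H x : ℂ)) ↔ TranslatesTotal H := by
  constructor
  · intro htotal g hg horth
    have hzero := htotal (fun x => (g x : ℂ)) hg.ofReal fun v => by
      simpa [← ofReal_mul, integral_complex_ofReal] using horth v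
    simpa using hzero
  · intro htotal g hg horth
    have hint (v : V) : Integrable (fun x => inner ℂ (H (x + v) : ℂ) (g x)) :=
      have hHv := hH.comp_measurePreserving (measurePreserving_add_right volume v)
      (hg.integrable_mul hHv.ofReal).congr (.of_forall fun x => by simp)
    have hre := htotal (fun x => (g x).re) hg.re fun v => by
      simpa using (integral_re (hint v)).trans (congrArg Complex.re (horth v))
    have him := htotal (fun x => (g x).im) hg.im fun v => by
      simpa using (integral_im (hint v)).trans (congrArg Complex.im (horth v))
    filter_upwards [hre, him] with x hx_re hx_im using Complex.ext hx_re hx_im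

theorem translatesTotal_real_iff_volume_fourier_zeros {H : V → ℝ} (hH₁ : Integrable H)
    (hH₂ : MemLp H 2) :
    TranslatesTotal H ↔ volume {ξ | 𝓕 (fun x => (H x : ℂ)) ξ = 0} = 0 :=
  (translatesTotal_ofReal_iff hH₂).symm.trans
    (translatesTotal_iff_volume_fourier_zeros hH₁.ofReal hH₂.ofReal)

end Fourier

section ExpCoordinates

variable {n : ℕ}

/-- Exponential coordinates on the positive orthant. Their domain is a Euclidean space because the
Fourier transform requires an inner product. -/
def expVec (u : EuclideanSpace ℝ (Fin n)) : Fin n → ℝ := fun i => Real.exp (u i)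

/-- Lebesgue measure weighted by the Jacobian determinant of `expVec`. -/
def expMeasure (n : ℕ) : Measure (EuclideanSpace ℝ (Fin n)) :=
  volume.withDensity fun u => ENNReal.ofReal (Real.exp (∑ i, u i))

lemma measurableSet_posOrth : MeasurableSet (posOrth n) := by
  simpa only [posOrth, ofPred_forall] using
    MeasurableSet.iInter fun i => measurableSet_lt measurable_const (measurable_pi_apply i)

lemma expVec_mem_posOrth (u : EuclideanSpace ℝ (Fin n)) : expVec u ∈ posOrth n :=
  fun _ => Real.exp_pos _

lemma expVec_toLp_log {x : Fin n → ℝ} (hx : x ∈ posOrth n) :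
    expVec (WithLp.toLp 2 fun i => Real.log (x i)) = x :=
  funext fun i => Real.exp_log (hx i)

lemma toLp_log_expVec (u : EuclideanSpace ℝ (Fin n)) :
    WithLp.toLp 2 (fun i => Real.log (expVec u i)) = u := by
  ext i
  exact Real.log_exp (u i)

lemma expVec_add (u v : EuclideanSpace ℝ (Fin n)) :
    expVec (u + v) = fun i => expVec u i * expVec v i :=
  funext fun i => Real.exp_add (u i) (v i)

lemma continuous_expVec : Continuous (expVec (n := n)) := by
  unfold expVec
  fun_prop

lemma measurableEmbedding_expVec : MeasurableEmbedding (expVec (n := n)) :=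
  continuous_expVec.measurableEmbedding <| Function.LeftInverse.injective
    (g := fun x : Fin n → ℝ => WithLp.toLp 2 fun i => Real.log (x i)) toLp_log_expVec

lemma measurable_exp_sum :
    Measurable fun u : Fin n → ℝ => ENNReal.ofReal (Real.exp (∑ i, u i)) := by
  fun_prop

lemma map_exp_withDensity_exp_sum :
    ((volume : Measure (Fin n → ℝ)).withDensity
        fun u => ENNReal.ofReal (Real.exp (∑ i, u i))).map (fun u i => Real.exp (u i)) =
      volume.restrict (posOrth n) := by
  let exp' (u : Fin n → ℝ) : (Fin n → ℝ) →L[ℝ] Fin n → ℝ :=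
    ContinuousLinearMap.pi fun i =>
      (Real.exp (u i) • ContinuousLinearMap.id ℝ ℝ).comp (ContinuousLinearMap.proj i)
  have hderiv (u : Fin n → ℝ) : HasFDerivAt (fun u i => Real.exp (u i)) (exp' u) u := by
    refine hasFDerivAt_pi.2 fun i => ?_
    convert! (hasFDerivAt_apply (𝕜 := ℝ) i u).exp using 1
  have hdet (u : Fin n → ℝ) : |(exp' u).det| = Real.exp (∑ i, u i) := by
    rw [ContinuousLinearMap.det_pi, Real.exp_sum, Finset.abs_prod]
    simp [ContinuousLinearMap.det]
  have hinj : Function.Injective fun (u : Fin n → ℝ) i => Real.exp (u i) :=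
    Real.exp_injective.comp_left
  have hrange : range (fun (u : Fin n → ℝ) i => Real.exp (u i)) = posOrth n := by
    ext x
    refine ⟨?_, fun hx => ⟨fun i => Real.log (x i), funext fun i => Real.exp_log (hx i)⟩⟩
    rintro ⟨u, rfl⟩ i
    exact Real.exp_pos _
  have h := map_withDensity_abs_det_fderiv_eq_addHaar volume nullMeasurableSet_univ
    (fun u _ => (hderiv u).hasFDerivWithinAt) hinj.injOn
  simpa only [Measure.restrict_univ, image_univ, hrange, hdet] using h

lemma measurePreserving_expVec :
    MeasurePreserving expVec (expMeasure n) (volume.restrict (posOrth n)) := by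
  have hofLp := PiLp.volume_preserving_ofLp (Fin n)
  have hmap : (expMeasure n).map WithLp.ofLp =
      volume.withDensity fun u => ENNReal.ofReal (Real.exp (∑ i, u i)) := by
    ext s hs
    rw [Measure.map_apply hofLp.measurable hs, expMeasure,
      withDensity_apply _ (hofLp.measurable hs), withDensity_apply _ hs]
    exact hofLp.setLIntegral_comp_preimage hs measurable_exp_sum
  refine ⟨continuous_expVec.measurable, ?_⟩
  rw [← map_exp_withDensity_exp_sum, ← hmap, Measure.map_map (by fun_prop) hofLp.measurable]
  rfl

lemma measurable_expMeasure_density :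
    Measurable fun u : EuclideanSpace ℝ (Fin n) => ENNReal.ofReal (Real.exp (∑ i, u i)) := by
  fun_prop

lemma expMeasure_absolutelyContinuous : expMeasure n ≪ volume :=
  withDensity_absolutelyContinuous _ _

lemma absolutelyContinuous_expMeasure : volume ≪ expMeasure n :=
  withDensity_absolutelyContinuous' measurable_expMeasure_density.aemeasurable
    (.of_forall fun _ => (ENNReal.ofReal_pos.2 (Real.exp_pos _)).ne')

lemma ae_posOrth_iff {p : (Fin n → ℝ) → Prop} :
    (∀ᵐ x ∂volume.restrict (posOrth n), p x) ↔ ∀ᵐ u, p (expVec u) := by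
  rw [← measurePreserving_expVec.map_eq, measurableEmbedding_expVec.ae_map_iff]
  exact ⟨fun h => absolutelyContinuous_expMeasure.ae_le h,
    fun h => expMeasure_absolutelyContinuous.ae_le h⟩

section Codomain

variable {F : Type*} [NormedAddCommGroup F] {f : (Fin n → ℝ) → F}

lemma aestronglyMeasurable_posOrth_iff :
    AEStronglyMeasurable f (volume.restrict (posOrth n)) ↔
      AEStronglyMeasurable (fun u => f (expVec u)) := by
  rw [← measurePreserving_expVec.aestronglyMeasurable_comp_iff measurableEmbedding_expVec]
  exact ⟨fun h => h.mono_ac absolutelyContinuous_expMeasure,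
    fun h => h.mono_ac expMeasure_absolutelyContinuous⟩

variable [NormedSpace ℝ F]

lemma integral_posOrth (f : (Fin n → ℝ) → F) :
    ∫ x in posOrth n, f x =
      ∫ u : EuclideanSpace ℝ (Fin n), Real.exp (∑ i, u i) • f (expVec u) := by
  rw [← measurePreserving_expVec.integral_comp measurableEmbedding_expVec, expMeasure,
    integral_withDensity_eq_integral_toReal_smul measurable_expMeasure_density (by simp)]
  simp only [ENNReal.toReal_ofReal (Real.exp_pos _).le]

lemma integrableOn_posOrth_iff :
    IntegrableOn f (posOrth n) ↔
      Integrable fun u : EuclideanSpace ℝ (Fin n) => Real.exp (∑ i, u i) • f (expVec u) := by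
  rw [IntegrableOn, ← measurePreserving_expVec.integrable_comp_emb measurableEmbedding_expVec,
    expMeasure, integrable_withDensity_iff_integrable_smul' measurable_expMeasure_density (by simp)]
  simp only [ENNReal.toReal_ofReal (Real.exp_pos _).le, Function.comp_apply]

end Codomain

end ExpCoordinates

section LogCost

variable {ι : Type*}

/-- The vector with all coordinates equal to `s`. -/
def constVec (s : ℝ) : EuclideanSpace ℝ ι := WithLp.toLp 2 fun _ => s

@[simp] lemma constVec_apply (s : ℝ) (i : ι) : (constVec s : EuclideanSpace ℝ ι) i = s := rfl

variable [Fintype ι]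

/-- A cost function read in exponential coordinates: degree-one homogeneity becomes
`add_constVec`, and boundedness of the level sets becomes `exists_le`. -/
structure IsLogCost (Q : EuclideanSpace ℝ ι → ℝ) : Prop where
  aemeasurable : AEMeasurable Q
  pos : ∀ u, 0 < Q u
  add_constVec : ∀ u s, Q (u + constVec s) = Real.exp s * Q u
  exists_le : ∃ L, ∀ u, Q u ≤ 1 → ∀ i, u i ≤ L

/-- The function whose translates represent the profit operator at `p₀ = 1` in exponential
coordinates, after the weight `x ^ c` has been moved onto it. -/
def profitKernel (c : ι → ℝ) (Q : EuclideanSpace ℝ ι → ℝ) (u : EuclideanSpace ℝ ι) : ℝ :=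
  Real.exp (∑ i, c i * u i) * max 0 (1 - Q u)

/-- The exponential `exp (z · u)` with the complex weight `z`, damped by the profit at output
price `t`. At `t = 1` and real `z` this is `profitKernel`. -/
def profitExp (z : ι → ℂ) (Q : EuclideanSpace ℝ ι → ℝ) (t : ℝ) (u : EuclideanSpace ℝ ι) : ℂ :=
  cexp (∑ i, z i * u i) * (max 0 (t - Q u) : ℝ)

variable {c : ι → ℝ} {z : ι → ℂ} {Q : EuclideanSpace ℝ ι → ℝ}

lemma profitKernel_nonneg (c : ι → ℝ) (Q : EuclideanSpace ℝ ι → ℝ) (u : EuclideanSpace ℝ ι) :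
    0 ≤ profitKernel c Q u :=
  mul_nonneg (Real.exp_pos _).le (le_max_left _ _)

lemma norm_profitExp_one (z : ι → ℂ) (Q : EuclideanSpace ℝ ι → ℝ) (u : EuclideanSpace ℝ ι) :
    ‖profitExp z Q 1 u‖ = profitKernel (fun i => (z i).re) Q u := by
  rw [profitExp, norm_mul, Complex.norm_exp, Complex.norm_real,
    Real.norm_of_nonneg (le_max_left _ _), profitKernel]
  simp

lemma profitKernel_le_prod_indicator (hpos : ∀ u, 0 < Q u) {L : ℝ}
    (hL : ∀ u, Q u ≤ 1 → ∀ i, u i ≤ L) (u : EuclideanSpace ℝ ι) :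
    profitKernel c Q u ≤ ∏ i, (Iic L).indicator (fun t => Real.exp (c i * t)) (u i) := by
  by_cases hu : Q u ≤ 1
  · calc profitKernel c Q u ≤ Real.exp (∑ i, c i * u i) :=
          mul_le_of_le_one_right (Real.exp_pos _).le
            (max_le zero_le_one (sub_le_self 1 (hpos u).le))
      _ = ∏ i, (Iic L).indicator (fun t => Real.exp (c i * t)) (u i) := by
          rw [Real.exp_sum]
          exact Finset.prod_congr rfl fun i _ =>
            (indicator_of_mem (mem_Iic.2 (hL u hu i)) (fun t => Real.exp (c i * t))).symm
  · rw [profitKernel, max_eq_left (by linarith), mul_zero]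
    exact Finset.prod_nonneg fun i _ => indicator_nonneg (fun _ _ => (Real.exp_pos _).le) _

lemma aestronglyMeasurable_profitKernel (hQ : AEMeasurable Q) :
    AEStronglyMeasurable (profitKernel c Q) := by
  unfold profitKernel
  exact AEMeasurable.aestronglyMeasurable (by fun_prop)

lemma integrable_profitKernel (hc : ∀ i, 0 < c i) (hQ : IsLogCost Q) :
    Integrable (profitKernel c Q) := by
  obtain ⟨L, hL⟩ := hQ.exists_le
  have hdom : Integrable fun u : ι → ℝ =>
      ∏ i, (Iic L).indicator (fun t => Real.exp (c i * t)) (u i) :=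
    Integrable.fintype_prod (f := fun i => (Iic L).indicator fun t => Real.exp (c i * t)) fun i =>
      (integrable_indicator_iff measurableSet_Iic).2 (integrableOn_exp_mul_Iic (hc i) L)
  refine ((PiLp.volume_preserving_ofLp ι).integrable_comp_of_integrable hdom).mono'
    (aestronglyMeasurable_profitKernel hQ.aemeasurable) (.of_forall fun u => ?_)
  rw [Real.norm_of_nonneg (profitKernel_nonneg c Q u)]
  exact profitKernel_le_prod_indicator hQ.pos hL u

lemma exists_profitKernel_le (hc : ∀ i, 0 ≤ c i) (hQ : IsLogCost Q) :
    ∃ B, ∀ u, profitKernel c Q u ≤ B := by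
  obtain ⟨L, hL⟩ := hQ.exists_le
  refine ⟨∏ i, Real.exp (c i * L), fun u =>
    (profitKernel_le_prod_indicator hQ.pos hL u).trans (Finset.prod_le_prod
      (fun i _ => indicator_nonneg (fun _ _ => (Real.exp_pos _).le) _) fun i _ => ?_)⟩
  refine indicator_apply_le' (fun hu => ?_) fun _ => (Real.exp_pos _).le
  exact Real.exp_le_exp.2 (mul_le_mul_of_nonneg_left hu (hc i))

lemma memLp_two_profitKernel (hc : ∀ i, 0 < c i) (hQ : IsLogCost Q) :
    MemLp (profitKernel c Q) 2 := by
  have hint := integrable_profitKernel hc hQ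
  obtain ⟨B, hB⟩ := exists_profitKernel_le (fun i => (hc i).le) hQ
  rw [memLp_two_iff_integrable_sq hint.aestronglyMeasurable]
  simp only [sq]
  refine hint.mul_bdd (c := B) hint.aestronglyMeasurable (.of_forall fun u => ?_)
  rw [Real.norm_of_nonneg (profitKernel_nonneg c Q u)]
  exact hB u

lemma integrable_profitExp_one (hz : ∀ i, 0 < (z i).re) (hQ : IsLogCost Q) :
    Integrable (profitExp z Q 1) := by
  have hmeas := hQ.aemeasurable
  refine (integrable_profitKernel hz hQ).mono' ?_
    (.of_forall fun u => (norm_profitExp_one z Q u).le)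
  unfold profitExp
  exact AEMeasurable.aestronglyMeasurable (by fun_prop)

lemma profitExp_add_constVec_log (z : ι → ℂ)
    (hQ : ∀ u s, Q (u + constVec s) = Real.exp s * Q u) {t : ℝ} (ht : 0 < t)
    (u : EuclideanSpace ℝ ι) :
    profitExp z Q t (u + constVec (Real.log t)) =
      (t : ℂ) ^ (∑ i, z i + 1) * profitExp z Q 1 u := by
  have ht₀ : (t : ℂ) ≠ 0 := ofReal_ne_zero.2 ht.ne'
  have hexp : cexp (∑ i, z i * (u + constVec (Real.log t) : EuclideanSpace ℝ ι) i) =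
      (t : ℂ) ^ (∑ i, z i) * cexp (∑ i, z i * u i) := by
    rw [cpow_def_of_ne_zero ht₀, ← Complex.exp_add, ← ofReal_log ht.le, Finset.mul_sum,
      ← Finset.sum_add_distrib]
    refine congrArg cexp (Finset.sum_congr rfl fun i _ => ?_)
    rw [PiLp.add_apply, constVec_apply, ofReal_add]
    ring
  have hmax : max 0 (t - Q (u + constVec (Real.log t))) = t * max 0 (1 - Q u) := by
    rw [hQ, Real.exp_log ht, mul_max_of_nonneg _ _ ht.le, mul_zero, mul_one_sub]
  rw [profitExp, hexp, hmax, profitExp, cpow_add _ _ ht₀, cpow_one, ofReal_mul]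
  ring

lemma integral_max_zero_sub_mul_exp_neg {a : ℝ} (ha : 0 ≤ a) :
    ∫ t in Ioi (0 : ℝ), max 0 (t - a) * Real.exp (-t) = Real.exp (-a) := by
  have htail : ∀ t ∈ Ioi (0 : ℝ) \ Ioi a, max 0 (t - a) * Real.exp (-t) = 0 := fun t ht => by
    rw [max_eq_left (sub_nonpos.2 (not_lt.1 ht.2)), zero_mul]
  calc ∫ t in Ioi (0 : ℝ), max 0 (t - a) * Real.exp (-t)
      = ∫ t in Ioi a, max 0 (t - a) * Real.exp (-t) :=
        setIntegral_eq_of_subset_of_forall_sdiff_eq_zero measurableSet_Ioi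
          (Ioi_subset_Ioi ha) htail
    _ = ∫ s in Ioi (0 : ℝ), max 0 (s + a - a) * Real.exp (-(s + a)) := by
        rw [← (measurePreserving_add_right volume a).setIntegral_preimage_emb
          (MeasurableEquiv.addRight a).measurableEmbedding, preimage_add_const_Ioi, sub_self]
    _ = ∫ s in Ioi (0 : ℝ), Real.exp (-a) * (Real.exp (-s) * s ^ ((2 : ℝ) - 1)) := by
        refine setIntegral_congr_fun measurableSet_Ioi fun s hs => ?_
        have hexponent : (2 : ℝ) - 1 = 1 := by norm_num
        simp only [add_sub_cancel_right, max_eq_right (mem_Ioi.1 hs).le, hexponent, Real.rpow_one,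
          neg_add, Real.exp_add]
        ring
    _ = Real.exp (-a) := by
        rw [integral_const_mul, ← Real.Gamma_eq_integral two_pos, Real.Gamma_two, mul_one]

lemma integral_exp_neg_smul_profitExp (z : ι → ℂ) (u : EuclideanSpace ℝ ι) (hQ : 0 ≤ Q u) :
    ∫ t in Ioi (0 : ℝ), Real.exp (-t) • profitExp z Q t u =
      cexp (∑ i, z i * u i) * Real.exp (-Q u) := by
  rw [← integral_max_zero_sub_mul_exp_neg hQ, ← integral_complex_ofReal, ← integral_const_mul]
  congr 1 with t
  rw [profitExp, real_smul, ofReal_mul]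
  ring

lemma exp_neg_smul_profitExp_add_constVec_log (z : ι → ℂ)
    (hQ : ∀ u s, Q (u + constVec s) = Real.exp s * Q u) {t : ℝ} (ht : 0 < t)
    (u : EuclideanSpace ℝ ι) :
    Real.exp (-t) • profitExp z Q t (u + constVec (Real.log t)) =
      Real.exp (-t) * (t : ℂ) ^ (∑ i, z i + 2 - 1) * profitExp z Q 1 u := by
  have hexponent : ∑ i, z i + 2 - 1 = ∑ i, z i + 1 := by ring
  rw [profitExp_add_constVec_log z hQ ht, real_smul, hexponent, mul_assoc]

lemma re_sum_add_two_pos (hz : ∀ i, 0 ≤ (z i).re) : 0 < (∑ i, z i + 2).re := by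
  rw [add_re, re_sum, re_ofNat]
  exact add_pos_of_nonneg_of_pos (Finset.sum_nonneg fun i _ => hz i) two_pos

lemma aestronglyMeasurable_exp_neg_smul_profitExp_prod (hQ : AEMeasurable Q) :
    AEStronglyMeasurable
      (fun p : EuclideanSpace ℝ ι × ℝ => Real.exp (-p.2) • profitExp z Q p.2 p.1)
      (volume.prod (volume.restrict (Ioi 0))) := by
  have hprofit : AEMeasurable (fun p : EuclideanSpace ℝ ι × ℝ => max 0 (p.2 - Q p.1))
      (volume.prod (volume.restrict (Ioi 0))) :=
    aemeasurable_const.max (measurable_snd.aemeasurable.sub hQ.comp_fst)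
  have hexp : Measurable fun p : EuclideanSpace ℝ ι × ℝ => cexp (∑ i, z i * p.1 i) := by fun_prop
  have hdensity : Measurable fun p : EuclideanSpace ℝ ι × ℝ => Real.exp (-p.2) := by fun_prop
  exact (hdensity.aemeasurable.smul
    (hexp.aemeasurable.mul hprofit.complex_ofReal)).aestronglyMeasurable

lemma integrable_exp_neg_smul_profitExp_prod (hz : ∀ i, 0 < (z i).re) (hQ : IsLogCost Q) :
    Integrable (fun p : EuclideanSpace ℝ ι × ℝ => Real.exp (-p.2) • profitExp z Q p.2 p.1)
      (volume.prod (volume.restrict (Ioi 0))) := by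
  have hbase := integrable_profitExp_one hz hQ
  rw [integrable_prod_iff'
    (aestronglyMeasurable_exp_neg_smul_profitExp_prod hQ.aemeasurable)]
  constructor
  · filter_upwards [ae_restrict_mem measurableSet_Ioi] with t ht
    have hshift := (hbase.const_mul
      (Real.exp (-t) * (t : ℂ) ^ (∑ i, z i + 2 - 1))).comp_add_right (-constVec (Real.log t))
    simpa only [← exp_neg_smul_profitExp_add_constVec_log z hQ.add_constVec (mem_Ioi.1 ht),
      neg_add_cancel_right] using hshift
  · refine ((GammaIntegral_convergent (re_sum_add_two_pos fun i => (hz i).le)).norm.mul_const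
      (∫ u, ‖profitExp z Q 1 u‖)).congr ?_
    filter_upwards [ae_restrict_mem measurableSet_Ioi] with t ht
    rw [← integral_const_mul,
      ← integral_add_right_eq_self (fun u => ‖Real.exp (-t) • _‖) (constVec (Real.log t))]
    congr 1 with u
    rw [exp_neg_smul_profitExp_add_constVec_log z hQ.add_constVec ht,
      norm_mul _ (profitExp _ _ _ _)]

/-- Homogeneity of the cost turns averaging the profit over output prices, with density
`exp (-t)`, into a Gamma factor. -/
theorem integral_cexp_mul_exp_neg_eq_Gamma_mul (hz : ∀ i, 0 < (z i).re) (hQ : IsLogCost Q) :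
    ∫ u, cexp (∑ i, z i * u i) * Real.exp (-Q u) =
      Gamma (∑ i, z i + 2) * ∫ u, profitExp z Q 1 u := by
  calc ∫ u, cexp (∑ i, z i * u i) * Real.exp (-Q u)
      = ∫ u, ∫ t in Ioi (0 : ℝ), Real.exp (-t) • profitExp z Q t u := by
        congr 1 with u
        exact (integral_exp_neg_smul_profitExp z u (hQ.pos u).le).symm
    _ = ∫ t in Ioi (0 : ℝ), ∫ u, Real.exp (-t) • profitExp z Q t u :=
        integral_integral_swap (integrable_exp_neg_smul_profitExp_prod hz hQ)
    _ = ∫ t in Ioi (0 : ℝ), Real.exp (-t) * (t : ℂ) ^ (∑ i, z i + 2 - 1) *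
          ∫ u, profitExp z Q 1 u := by
        refine setIntegral_congr_fun measurableSet_Ioi fun t ht => ?_
        rw [← integral_const_mul, ← integral_add_right_eq_self (fun u => Real.exp (-t) • _)
          (constVec (Real.log t))]
        congr 1 with u
        exact exp_neg_smul_profitExp_add_constVec_log z hQ.add_constVec ht u
    _ = Gamma (∑ i, z i + 2) * ∫ u, profitExp z Q 1 u := by
        rw [integral_mul_const, Gamma_eq_integral (re_sum_add_two_pos fun i => (hz i).le),
          GammaIntegral]

open FourierTransform in
lemma integral_profitExp_one_eq_fourier (c ξ : ι → ℝ) (Q : EuclideanSpace ℝ ι → ℝ) :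
    ∫ u, profitExp (fun i => c i + I * ξ i) Q 1 u =
      𝓕 (fun u => (profitKernel c Q u : ℂ)) (-(2 * Real.pi)⁻¹ • WithLp.toLp 2 ξ) := by
  rw [Real.fourier_eq']
  congr 1 with u
  have hphase : ∑ i, (c i + I * ξ i) * (u i : ℂ) =
      ↑(-2 * Real.pi * inner ℝ u (-(2 * Real.pi)⁻¹ • WithLp.toLp 2 ξ)) * I +
        ↑(∑ i, c i * u i) := by
    have hinner : -2 * Real.pi * inner ℝ u (-(2 * Real.pi)⁻¹ • WithLp.toLp 2 ξ) =
        ∑ i, ξ i * u i := by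
      have hscale : -2 * Real.pi * -(2 * Real.pi)⁻¹ = 1 := by field
      rw [inner_smul_right, ← mul_assoc, hscale, one_mul, PiLp.inner_apply]
      simp only [RCLike.inner_apply, conj_trivial]
    rw [hinner, ofReal_sum, ofReal_sum, Finset.sum_mul, ← Finset.sum_add_distrib]
    refine Finset.sum_congr rfl fun i _ => ?_
    push_cast
    ring
  rw [profitExp, profitKernel, hphase, Complex.exp_add, ofReal_mul (Real.exp _), ofReal_exp,
    smul_eq_mul, mul_assoc]

end LogCost

section Transfer

open FourierTransform

variable {n : ℕ} {q : (Fin n → ℝ) → ℝ} {c : Fin n → ℝ}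

lemma apply_expVec_add_constVec
    (hhom : ∀ lam : ℝ, 0 < lam → ∀ x ∈ posOrth n, q (fun i => lam * x i) = lam * q x)
    (u : EuclideanSpace ℝ (Fin n)) (s : ℝ) :
    q (expVec (u + constVec s)) = Real.exp s * q (expVec u) := by
  rw [← hhom _ (Real.exp_pos s) _ (expVec_mem_posOrth u), add_comm, expVec_add]
  rfl

lemma exists_forall_le_of_apply_expVec_le_one (hpos : ∀ x ∈ posOrth n, 0 < q x)
    (hhom : ∀ lam : ℝ, 0 < lam → ∀ x ∈ posOrth n, q (fun i => lam * x i) = lam * q x)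
    (hbdd : Bornology.IsBounded {x | x ∈ posOrth n ∧ q x = 1}) :
    ∃ L, ∀ u, q (expVec u) ≤ 1 → ∀ i, u i ≤ L := by
  obtain ⟨R, hR₀, hR⟩ := hbdd.exists_pos_norm_le
  refine ⟨Real.log R, fun u hu i => (Real.le_log_iff_exp_le hR₀).2 ?_⟩
  have hqu := hpos _ (expVec_mem_posOrth u)
  have hlevel : (fun i => (q (expVec u))⁻¹ * expVec u i) ∈ {x | x ∈ posOrth n ∧ q x = 1} := by
    refine ⟨fun i => mul_pos (inv_pos.2 hqu) (expVec_mem_posOrth u i), ?_⟩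
    rw [hhom _ (inv_pos.2 hqu) _ (expVec_mem_posOrth u), inv_mul_cancel₀ hqu.ne']
  calc Real.exp (u i) ≤ (q (expVec u))⁻¹ * expVec u i :=
        le_mul_of_one_le_left (Real.exp_pos _).le ((one_le_inv₀ hqu).2 hu)
    _ ≤ ‖fun i => (q (expVec u))⁻¹ * expVec u i‖ :=
        (le_abs_self _).trans (norm_le_pi_norm (fun i => (q (expVec u))⁻¹ * expVec u i) i)
    _ ≤ R := hR _ hlevel

lemma isLogCost_comp_expVec (hmeas : AEMeasurable q (volume.restrict (posOrth n)))
    (hpos : ∀ x ∈ posOrth n, 0 < q x)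
    (hhom : ∀ lam : ℝ, 0 < lam → ∀ x ∈ posOrth n, q (fun i => lam * x i) = lam * q x)
    (hbdd : Bornology.IsBounded {x | x ∈ posOrth n ∧ q x = 1}) :
    IsLogCost fun u => q (expVec u) where
  aemeasurable := (aestronglyMeasurable_posOrth_iff.1 hmeas.aestronglyMeasurable).aemeasurable
  pos u := hpos _ (expVec_mem_posOrth u)
  add_constVec := apply_expVec_add_constVec hhom
  exists_le := exists_forall_le_of_apply_expVec_le_one hpos hhom hbdd

lemma exp_sum_mul_prod_expVec_cpow (z : Fin n → ℂ) (u : EuclideanSpace ℝ (Fin n)) :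
    (Real.exp (∑ i, u i) : ℂ) * ∏ i, (expVec u i : ℂ) ^ (z i - 1) = cexp (∑ i, z i * u i) := by
  have hcpow (i : Fin n) : (expVec u i : ℂ) ^ (z i - 1) = cexp ((z i - 1) * u i) := by
    have hi := expVec_mem_posOrth u i
    rw [cpow_def_of_ne_zero (ofReal_ne_zero.2 hi.ne'), ← ofReal_log hi.le, expVec, Real.log_exp,
      mul_comm]
  simp only [hcpow]
  rw [← Complex.exp_sum, ofReal_exp, ← Complex.exp_add, ofReal_sum, ← Finset.sum_add_distrib]
  refine congrArg cexp (Finset.sum_congr rfl fun i _ => ?_)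
  ring

lemma mellinT_eq_integral_cexp (g : (Fin n → ℝ) → ℝ) (z : Fin n → ℂ) :
    mellinT n g z =
      ∫ u : EuclideanSpace ℝ (Fin n), cexp (∑ i, z i * u i) * g (expVec u) := by
  rw [mellinT, integral_posOrth]
  congr 1 with u
  rw [← exp_sum_mul_prod_expVec_cpow, real_smul, mul_assoc]

lemma mellinT_exp_neg_eq_Gamma_mul_fourier (hq : IsLogCost fun u => q (expVec u))
    (hc : ∀ i, 0 < c i) (ξ : Fin n → ℝ) :
    mellinT n (fun x => Real.exp (-q x)) (fun i => (c i : ℂ) + I * (ξ i : ℂ)) =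
      Gamma (∑ i, ((c i : ℂ) + I * (ξ i : ℂ)) + 2) *
        𝓕 (fun u => (profitKernel c (fun u => q (expVec u)) u : ℂ))
          (-(2 * Real.pi)⁻¹ • WithLp.toLp 2 ξ) := by
  rw [mellinT_eq_integral_cexp,
    integral_cexp_mul_exp_neg_eq_Gamma_mul (by simpa using hc) hq,
    integral_profitExp_one_eq_fourier]

lemma volume_mellinT_zeros_eq_zero_iff (hq : IsLogCost fun u => q (expVec u))
    (hc : ∀ i, 0 < c i) :
    volume {ξ : Fin n → ℝ |
        mellinT n (fun x => Real.exp (-q x)) (fun i => (c i : ℂ) + I * (ξ i : ℂ)) = 0} = 0 ↔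
      volume {η : EuclideanSpace ℝ (Fin n) |
        𝓕 (fun u => (profitKernel c (fun u => q (expVec u)) u : ℂ)) η = 0} = 0 := by
  set zeros := {η : EuclideanSpace ℝ (Fin n) |
    𝓕 (fun u => (profitKernel c (fun u => q (expVec u)) u : ℂ)) η = 0}
  have hscale : -(2 * Real.pi)⁻¹ ≠ 0 := neg_ne_zero.2 (inv_ne_zero Real.two_pi_pos.ne')
  have hpreimage : {ξ : Fin n → ℝ |
        mellinT n (fun x => Real.exp (-q x)) (fun i => (c i : ℂ) + I * (ξ i : ℂ)) = 0} =
      MeasurableEquiv.toLp 2 (Fin n → ℝ) ⁻¹' ((-(2 * Real.pi)⁻¹ • ·) ⁻¹' zeros) := by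
    ext ξ
    have hGamma : Gamma (∑ i, ((c i : ℂ) + I * (ξ i : ℂ)) + 2) ≠ 0 :=
      Gamma_ne_zero_of_re_pos (re_sum_add_two_pos fun i => by simpa using (hc i).le)
    rw [mem_ofPred_eq, mellinT_exp_neg_eq_Gamma_mul_fourier hq hc, mul_eq_zero,
      or_iff_right hGamma]
    rfl
  have htoLp : MeasurePreserving (MeasurableEquiv.toLp 2 (Fin n → ℝ)) volume volume :=
    PiLp.volume_preserving_toLp (Fin n)
  rw [hpreimage, htoLp.measure_preimage_equiv, Measure.addHaar_preimage_smul _ hscale,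
    mul_eq_zero, or_iff_right]
  simp

/-- `f` in exponential coordinates with the weight `x ^ w`; this is the isometry of `L²_w` onto the
unweighted `L²`. -/
def expWeighted (w : Fin n → ℝ) (f : (Fin n → ℝ) → ℝ) (u : EuclideanSpace ℝ (Fin n)) : ℝ :=
  Real.exp (∑ i, w i * u i) * f (expVec u)

lemma ae_posOrth_eq_zero_iff_expWeighted (w : Fin n → ℝ) (f : (Fin n → ℝ) → ℝ) :
    (∀ᵐ x ∂volume.restrict (posOrth n), f x = 0) ↔ ∀ᵐ u, expWeighted w f u = 0 := by
  rw [ae_posOrth_iff]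
  simp [expWeighted]

lemma surjective_expWeighted (w : Fin n → ℝ) : Function.Surjective (expWeighted w) := by
  refine fun g => ⟨fun x => Real.exp (-∑ i, w i * Real.log (x i)) *
    g (WithLp.toLp 2 fun i => Real.log (x i)), funext fun u => ?_⟩
  simp only [expWeighted, toLp_log_expVec]
  simp only [expVec, Real.log_exp]
  rw [← mul_assoc, ← Real.exp_add, add_neg_cancel, Real.exp_zero, one_mul]

lemma aestronglyMeasurable_expWeighted_iff (w : Fin n → ℝ) (f : (Fin n → ℝ) → ℝ) :
    AEStronglyMeasurable (expWeighted w f) ↔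
      AEStronglyMeasurable f (volume.restrict (posOrth n)) := by
  have hweight (v : Fin n → ℝ) : AEStronglyMeasurable
      fun u : EuclideanSpace ℝ (Fin n) => Real.exp (∑ i, v i * u i) :=
    Continuous.aestronglyMeasurable (by fun_prop)
  rw [aestronglyMeasurable_posOrth_iff]
  refine ⟨fun h => ((hweight (-w)).mul h).congr (.of_forall fun u => ?_), (hweight w).mul⟩
  simp [expWeighted, ← mul_assoc, ← Real.exp_add]

lemma exp_sum_smul_sq_mul_prod_expVec_rpow (w : Fin n → ℝ) (f : (Fin n → ℝ) → ℝ)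
    (u : EuclideanSpace ℝ (Fin n)) :
    Real.exp (∑ i, u i) • (|f (expVec u)| ^ 2 * ∏ i, expVec u i ^ (2 * w i - 1)) =
      expWeighted w f u ^ 2 := by
  have hprod : ∏ i, expVec u i ^ (2 * w i - 1) = Real.exp (∑ i, (2 * w i - 1) * u i) := by
    rw [Real.exp_sum]
    refine Finset.prod_congr rfl fun i _ => ?_
    rw [expVec, ← Real.exp_mul, mul_comm]
  have hexponent : ∑ i, u i + ∑ i, (2 * w i - 1) * u i = (2 : ℕ) * ∑ i, w i * u i := by
    rw [Finset.mul_sum, ← Finset.sum_add_distrib]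
    refine Finset.sum_congr rfl fun i _ => ?_
    push_cast
    ring
  rw [hprod, smul_eq_mul, sq_abs, mul_left_comm, ← Real.exp_add, hexponent, Real.exp_nat_mul,
    expWeighted, mul_pow, mul_comm]

lemma memL2w_iff_memLp_expWeighted (w : Fin n → ℝ) (f : (Fin n → ℝ) → ℝ) :
    MemL2w n w f ↔ MemLp (expWeighted w f) 2 := by
  rw [MemL2w, ← aestronglyMeasurable_expWeighted_iff w, integrableOn_posOrth_iff]
  simp only [exp_sum_smul_sq_mul_prod_expVec_rpow]
  exact ⟨fun h => (memLp_two_iff_integrable_sq h.1).2 h.2, fun h =>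
    ⟨h.aestronglyMeasurable, (memLp_two_iff_integrable_sq h.aestronglyMeasurable).1 h⟩⟩

lemma piq_eq_mul_piq_one
    (hhom : ∀ lam : ℝ, 0 < lam → ∀ x ∈ posOrth n, q (fun i => lam * x i) = lam * q x)
    (f : (Fin n → ℝ) → ℝ) {p₀ : ℝ} (hp₀ : 0 < p₀) {p : Fin n → ℝ} (hp : p ∈ posOrth n) :
    Piq n q f p₀ p = p₀ * Piq n q f 1 fun i => p₀⁻¹ * p i := by
  rw [Piq, Piq, ← integral_const_mul]
  refine setIntegral_congr_fun measurableSet_posOrth fun x hx => ?_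
  have hq := hhom p₀⁻¹ (inv_pos.2 hp₀) (fun i => p i * x i) fun i => mul_pos (hp i) (hx i)
  simp only [← mul_assoc] at hq
  simp only [hq, mul_max_of_nonneg _ _ hp₀.le, ← mul_assoc, mul_zero, mul_sub, mul_one,
    mul_inv_cancel₀ hp₀.ne', one_mul]

lemma piq_one_expVec (q f : (Fin n → ℝ) → ℝ) (c : Fin n → ℝ) (v : EuclideanSpace ℝ (Fin n)) :
    Piq n q f 1 (expVec v) = Real.exp (-∑ i, c i * v i) *
      ∫ u, inner ℝ (profitKernel c (fun u => q (expVec u)) (u + v))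
        (expWeighted (fun i => 1 - c i) f u) := by
  rw [Piq, integral_posOrth, ← integral_const_mul]
  congr 1 with u
  have hweights : Real.exp (∑ i, u i) = Real.exp (-∑ i, c i * v i) *
      (Real.exp (∑ i, c i * (u + v) i) * Real.exp (∑ i, (1 - c i) * u i)) := by
    rw [← Real.exp_add, ← Real.exp_add, ← Finset.sum_add_distrib, ← Finset.sum_neg_distrib,
      ← Finset.sum_add_distrib]
    refine congrArg Real.exp (Finset.sum_congr rfl fun i _ => ?_)
    rw [PiLp.add_apply]
    ring
  have hcost : (fun i => expVec v i * expVec u i) = expVec (u + v) := by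
    rw [add_comm, expVec_add]
  rw [hweights, hcost, profitKernel, expWeighted, smul_eq_mul, RCLike.inner_apply, conj_trivial]
  ring

lemma forall_piq_eq_zero_iff
    (hhom : ∀ lam : ℝ, 0 < lam → ∀ x ∈ posOrth n, q (fun i => lam * x i) = lam * q x)
    (c : Fin n → ℝ) (f : (Fin n → ℝ) → ℝ) :
    (∀ p₀ : ℝ, 0 < p₀ → ∀ p ∈ posOrth n, Piq n q f p₀ p = 0) ↔
      ∀ v, ∫ u, inner ℝ (profitKernel c (fun u => q (expVec u)) (u + v))
        (expWeighted (fun i => 1 - c i) f u) = 0 := by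
  have hone (v : EuclideanSpace ℝ (Fin n)) : Piq n q f 1 (expVec v) = 0 ↔
      ∫ u, inner ℝ (profitKernel c (fun u => q (expVec u)) (u + v))
        (expWeighted (fun i => 1 - c i) f u) = 0 := by
    rw [piq_one_expVec q f c, mul_eq_zero, or_iff_right (Real.exp_pos _).ne']
  simp only [← hone]
  refine ⟨fun h v => h 1 one_pos _ (expVec_mem_posOrth v), fun h p₀ hp₀ p hp => ?_⟩
  have hp' : (fun i => p₀⁻¹ * p i) ∈ posOrth n := fun i => mul_pos (inv_pos.2 hp₀) (hp i)
  rw [piq_eq_mul_piq_one hhom f hp₀ hp, ← expVec_toLp_log hp', h, mul_zero]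

theorem forall_piq_eq_zero_imp_iff_translatesTotal
    (hhom : ∀ lam : ℝ, 0 < lam → ∀ x ∈ posOrth n, q (fun i => lam * x i) = lam * q x)
    (c : Fin n → ℝ) :
    (∀ f : (Fin n → ℝ) → ℝ, MemL2w n (fun i => 1 - c i) f →
        (∀ p₀ : ℝ, 0 < p₀ → ∀ p ∈ posOrth n, Piq n q f p₀ p = 0) →
        ∀ᵐ x ∂volume.restrict (posOrth n), f x = 0) ↔
      TranslatesTotal (profitKernel c fun u => q (expVec u)) := by
  simp only [TranslatesTotal, (surjective_expWeighted fun i => 1 - c i).forall,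
    memL2w_iff_memLp_expWeighted, forall_piq_eq_zero_iff hhom c,
    ae_posOrth_eq_zero_iff_expWeighted fun i => 1 - c i]

end Transfer

theorem piq_injective_L2_iff_mellin_zeros_measure_zero_general
    (n : ℕ) (q : (Fin n → ℝ) → ℝ) (hmeas : AEMeasurable q (volume.restrict (posOrth n)))
    (hpos : ∀ x ∈ posOrth n, 0 < q x)
    (hhom : ∀ lam : ℝ, 0 < lam → ∀ x ∈ posOrth n, q (fun i => lam * x i) = lam * q x)
    (hbdd : Bornology.IsBounded {x | x ∈ posOrth n ∧ q x = 1})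
    (c : Fin n → ℝ) (hc : ∀ i, 0 < c i) :
    (∀ f : (Fin n → ℝ) → ℝ, MemL2w n (fun i => 1 - c i) f →
        (∀ p0 : ℝ, 0 < p0 → ∀ p ∈ posOrth n, Piq n q f p0 p = 0) →
        ∀ᵐ x ∂(volume.restrict (posOrth n)), f x = 0) ↔
      volume {ξ : Fin n → ℝ |
        mellinT n (fun x => Real.exp (-q x)) (fun i => (c i : ℂ) + I * (ξ i : ℂ)) = 0} = 0 := by
  have hQ := isLogCost_comp_expVec hmeas hpos hhom hbdd
  rw [forall_piq_eq_zero_imp_iff_translatesTotal hhom,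
    translatesTotal_real_iff_volume_fourier_zeros (integrable_profitKernel hc hQ)
      (memLp_two_profitKernel hc hQ),
    volume_mellinT_zeros_eq_zero_iff hQ hc]

/-- Theorem: for a cost function `q` and `c ∈ ℝ^n_+`, the profit operator `Π_q` is
injective on `L²_{I-c}(ℝ^n_+)` iff the zero set of `(M e^{-q})(c + iξ)` has Lebesgue
measure zero in `ℝ^n`. -/
theorem piq_injective_L2_iff_mellin_zeros_measure_zero
    (n : ℕ) (hn : 2 ≤ n) (q : (Fin n → ℝ) → ℝ) (hq : IsCostFun n q)
    (c : Fin n → ℝ) (hc : ∀ i, 0 < c i) :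
    (∀ f : (Fin n → ℝ) → ℝ, MemL2w n (fun i => 1 - c i) f →
        (∀ p0 : ℝ, 0 < p0 → ∀ p ∈ posOrth n, Piq n q f p0 p = 0) →
        ∀ᵐ x ∂(volume.restrict (posOrth n)), f x = 0) ↔
      volume {ξ : Fin n → ℝ |
        mellinT n (fun x => Real.exp (-q x)) (fun i => (c i : ℂ) + I * (ξ i : ℂ)) = 0} = 0 := by
  obtain ⟨hC1, hpos, hhom, hbdd⟩ := hq
  exact piq_injective_L2_iff_mellin_zeros_measure_zero_general n q
    (hC1.continuousOn.aemeasurable measurableSet_posOrth) hpos hhom (hbdd 1) c hc
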